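/- arXiv:2402.03265 — 3 statements merged into one kernel-verified Lean document; each statement's English description precedes it below -/
import Mathlib

section
/- Reduction to normal form A = C = 1: Let A, B, C, E, F, Q : ℝ → ℝ be smooth with A(t) > 0 and C(t) nonvanishing, and let α : ℝ → ℝ be a smooth bijection with α'(t) = A(t) for all t. Suppose u : ℝ × ℝ → ℝ is smooth and satisfies u_t + A(t) u_{xxxxx} + B(t) u_{xxx} + C(t) u u_{xxx} + E(t) u u_x + F(t) u_x u_{xx} + Q(t) u = 0 everywhere. Define ũ : ℝ × ℝ → ℝ by ũ(α(t), x) = (C(t)/A(t)) u(t,x), and define B̃(α(t)) = B(t)/A(t), Ẽ(α(t)) = E(t)/C(t), F̃(α(t)) = F(t)/C(t), Q̃(α(t)) = (Q(t) + A'(t)/A(t) − C'(t)/C(t))/A(t). Then ũ satisfies ũ_{t̃} + ũ_{x̃x̃x̃x̃x̃} + B̃(t̃) ũ_{x̃x̃x̃} + ũ ũ_{x̃x̃x̃} + Ẽ(t̃) ũ ũ_{x̃} + F̃(t̃) ũ_{x̃} ũ_{x̃x̃} + Q̃(t̃) ũ = 0 everywhere, i.e. the transformed equation has Ã ≡ 1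 and C̃ ≡ 1. -/
open Real MeasureTheory

/-- Partial derivative with respect to the first (time) variable. -/
noncomputable def pt (f : ℝ → ℝ → ℝ) (t x : ℝ) : ℝ := deriv (fun s => f s x) t

/-- Partial derivative with respect to the second (space) variable. -/
noncomputable def px (f : ℝ → ℝ → ℝ) (t x : ℝ) : ℝ := deriv (fun y => f t y) x

/-- The fifth-order KdV expression
`𝔈[u] = u_t + u_xxxxx + B u_xxx + u u_xxx + E u u_x + F u_x u_xx + Q u`. -/
noncomputable def KdV (B E F Q : ℝ → ℝ) (u : ℝ → ℝ → ℝ) (t x : ℝ) : ℝ :=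
  pt u t x + px (px (px (px (px u)))) t x + B t * px (px (px u)) t x
    + u t x * px (px (px u)) t x + E t * (u t x * px u t x)
    + F t * (px u t x * px (px u) t x) + Q t * u t x

/-- The full class of fifth-order KdV equations with time-dependent coefficients and
linear damping: `u_t + A u_xxxxx + B u_xxx + C u u_xxx + E u u_x + F u_x u_xx + Q u`. -/
noncomputable def KdVfull (A B C E F Q : ℝ → ℝ) (u : ℝ → ℝ → ℝ) (t x : ℝ) : ℝ :=
  pt u t x + A t * px (px (px (px (px u)))) t x + B t * px (px (px u)) t x
    + C t * (u t x * px (px (px u)) t x) + E t * (u t x * px u t x)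
    + F t * (px u t x * px (px u) t x) + Q t * u t x

theorem px_scale {f g : ℝ → ℝ → ℝ} {s t c : ℝ} (h : ∀ x, f s x = c * g t x) :
    ∀ x, px f s x = c * px g t x := by
  intro x
  have h1 : (fun y => f s y) = fun y => c * g t y := funext h
  simp only [px]
  rw [h1, deriv_const_mul_field]

theorem inv_hasDerivAt (A α : ℝ → ℝ) (hApos : ∀ t, 0 < A t) (hαbij : Function.Bijective α)
    (hα' : ∀ t, HasDerivAt α (A t) t) :
    ∃ β : ℝ → ℝ, (∀ t, β (α t) = t) ∧ (∀ s, α (β s) = s) ∧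
      ∀ t, HasDerivAt β (A t)⁻¹ (α t) := by
  have hm : StrictMono α := strictMono_of_deriv_pos (fun t => by
    rw [(hα' t).deriv]; exact hApos t)
  let e := StrictMono.orderIsoOfSurjective α hm hαbij.2
  have h1 : ∀ t, e.symm (α t) = t := fun t => e.symm_apply_apply t
  have h2 : ∀ s, α (e.symm s) = s := fun s => e.apply_symm_apply s
  refine ⟨e.symm, h1, h2, fun t => ?_⟩
  apply HasDerivAt.of_local_left_inverse (f := α)
  · exact e.symm.continuous.continuousAt
  · rw [h1]; exact hα' t
  · exact (hApos t).ne'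
  · exact Filter.Eventually.of_forall h2

/-- reduction to the normal form `A = C = 1`.  With `α' = A`,
`ũ(α(t), x) = (C/A) u(t,x)`, `B̃ = B/A`, `Ẽ = E/C`, `F̃ = F/C`,
`Q̃ = (Q + A'/A − C'/C)/A`, the transformed function satisfies the equation of the class
with leading coefficients `Ã ≡ 1` and `C̃ ≡ 1`. -/
theorem reduction_to_normal_form
    (A B C E F Q : ℝ → ℝ)
    (hA : ContDiff ℝ (⊤ : ℕ∞) A) (hB : ContDiff ℝ (⊤ : ℕ∞) B)
    (hC : ContDiff ℝ (⊤ : ℕ∞) C) (hE : ContDiff ℝ (⊤ : ℕ∞) E)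
    (hF : ContDiff ℝ (⊤ : ℕ∞) F) (hQ : ContDiff ℝ (⊤ : ℕ∞) Q)
    (hApos : ∀ t, 0 < A t) (hCne : ∀ t, C t ≠ 0)
    (α : ℝ → ℝ) (hα : ContDiff ℝ (⊤ : ℕ∞) α) (hαbij : Function.Bijective α)
    (hα' : ∀ t, HasDerivAt α (A t) t)
    (u : ℝ → ℝ → ℝ) (hu : ContDiff ℝ (⊤ : ℕ∞) (Function.uncurry u))
    (hsol : ∀ t x, KdVfull A B C E F Q u t x = 0)
    (u' : ℝ → ℝ → ℝ) (B' E' F' Q' : ℝ → ℝ)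
    (hu' : ∀ t x, u' (α t) x = (C t / A t) * u t x)
    (hB' : ∀ t, B' (α t) = B t / A t)
    (hE' : ∀ t, E' (α t) = E t / C t)
    (hF' : ∀ t, F' (α t) = F t / C t)
    (hQ' : ∀ t, Q' (α t) = (Q t + deriv A t / A t - deriv C t / C t) / A t) :
    ∀ t' x', KdVfull (fun _ => 1) B' (fun _ => 1) E' F' Q' u' t' x' = 0 := by
  intro t' x
  obtain ⟨β, hβ1, hβ2, hβ'⟩ := inv_hasDerivAt A α hApos hαbij hα'
  obtain ⟨t, rfl⟩ := hαbij.2 t'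
  have d1 := px_scale (hu' t)
  have d2 := px_scale d1
  have d3 := px_scale d2
  have d4 := px_scale d3
  have d5 := px_scale d4
  have hAd : HasDerivAt A (deriv A t) t := (hA.differentiable (by simp) t).hasDerivAt
  have hCd : HasDerivAt C (deriv C t) t := (hC.differentiable (by simp) t).hasDerivAt
  have hud : HasDerivAt (fun s => u s x) (pt u t x) t := by
    have h : Differentiable ℝ (fun s => Function.uncurry u (s, x)) :=
      (hu.differentiable (by simp)).comp (by fun_prop)
    exact (h t).hasDerivAt
  have hA0 := (hApos t).ne'
  have hC0 := hCne t
  have hg := (hCd.div hAd hA0).mul hud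
  have hg' := HasDerivAt.comp_of_eq (α t) hg (hβ' t) (hβ1 t).symm
  have hpt : pt u' (α t) x = ((deriv C t * A t - C t * deriv A t) / A t ^ 2 * u t x
      + (C / A) t * pt u t x) * (A t)⁻¹ := by
    have he : (fun s => u' s x) = (C / A * fun s => u s x) ∘ β := by
      funext s
      have := hu' (β s) x
      rw [hβ2] at this
      exact this
    unfold pt
    rw [he]
    exact hg'.deriv
  have hs := hsol t x
  unfold KdVfull at hs ⊢
  rw [hpt, d1, d2, d3, d5, hu', hB', hE', hF', hQ']
  have hs' : pt u t x = -(A t * px (px (px (px (px u)))) t x + B t * px (px (px u)) t x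
    + C t * (u t x * px (px (px u)) t x) + E t * (u t x * px u t x)
    + F t * (px u t x * px (px u) t x) + Q t * u t x) := by linarith
  simp only [Pi.div_apply, hs']
  field_simp
  ring
end

section
/- Conservation law for F(t) = 2 from the multiplier e^{2∫Q} u: Let B, E, Q : ℝ → ℝ be smooth, take F(t) ≡ 2, and let H : ℝ → ℝ satisfy H' = Q. Define the conserved density C¹(t,x) := (1/2) e^{2H(t)} u(t,x)² and the flux C²(t,x) := e^{2H(t)} ( u u_{xxxx} − u_x u_{xxx} + (1/2) u_{xx}² + B(t)( u u_{xx} − (1/2) u_x² ) + u² u_{xx} + (E(t)/3) u³ ). Then for every smooth u : ℝ × ℝ → ℝ the pointwise identity ∂_t C¹ + ∂_x C² = e^{2H(t)} u · 𝔈[u] holds; in particular, if u satisfies 𝔈[u] = 0 everywhere (with F(t) = 2), then ∂_t C¹ + ∂_x C² = 0 everywhere. -/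
open Real MeasureTheory

/-- Space slices of `px f` are smooth when those of `f` are. -/
theorem px_slice_smooth (f : ℝ → ℝ → ℝ) (t : ℝ) (h : ContDiff ℝ (⊤ : ℕ∞) (f t)) :
    ContDiff ℝ (⊤ : ℕ∞) (px f t) := by
  have h2 : ContDiff ℝ (⊤ : ℕ∞) (deriv (f t)) := (contDiff_infty_iff_deriv.mp h).2
  exact h2

/-- A smooth space slice has derivative `px f`. -/
theorem px_slice_hasDerivAt (f : ℝ → ℝ → ℝ) (t x : ℝ) (h : ContDiff ℝ (⊤ : ℕ∞) (f t)) :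
    HasDerivAt (fun y => f t y) (px f t x) x :=
  ((contDiff_infty_iff_deriv.mp h).1 x).hasDerivAt

/-- conservation law for `F ≡ 2` from the multiplier `e^{2∫Q} u`.
With `H' = Q`, density `C¹ = (1/2) e^{2H} u²` and flux
`C² = e^{2H}( u u_xxxx − u_x u_xxx + (1/2) u_xx² + B(u u_xx − (1/2) u_x²) + u² u_xx
  + (E/3) u³ )`, one has `∂_t C¹ + ∂_x C² = e^{2H} u 𝔈[u]` pointwise; in particular
`∂_t C¹ + ∂_x C² = 0` on solutions with `F = 2`. -/
theorem conservation_law_F_eq_two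
    (B E Q : ℝ → ℝ)
    (hB : ContDiff ℝ (⊤ : ℕ∞) B) (hE : ContDiff ℝ (⊤ : ℕ∞) E)
    (hQ : ContDiff ℝ (⊤ : ℕ∞) Q)
    (H : ℝ → ℝ) (hH : ∀ t, HasDerivAt H (Q t) t)
    (u : ℝ → ℝ → ℝ) (hu : ContDiff ℝ (⊤ : ℕ∞) (Function.uncurry u)) :
    (∀ t x,
      pt (fun t x => (1 / 2) * Real.exp (2 * H t) * (u t x) ^ 2) t x
        + px (fun t x => Real.exp (2 * H t) *
            (u t x * px (px (px (px u))) t x - px u t x * px (px (px u)) t x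
              + (1 / 2) * (px (px u) t x) ^ 2
              + B t * (u t x * px (px u) t x - (1 / 2) * (px u t x) ^ 2)
              + (u t x) ^ 2 * px (px u) t x + (E t / 3) * (u t x) ^ 3)) t x
      = Real.exp (2 * H t) * u t x * KdV B E (fun _ => 2) Q u t x)
    ∧ ((∀ t x, KdV B E (fun _ => 2) Q u t x = 0) →
      ∀ t x,
        pt (fun t x => (1 / 2) * Real.exp (2 * H t) * (u t x) ^ 2) t x
          + px (fun t x => Real.exp (2 * H t) *
              (u t x * px (px (px (px u))) t x - px u t x * px (px (px u)) t x
                + (1 / 2) * (px (px u) t x) ^ 2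
                + B t * (u t x * px (px u) t x - (1 / 2) * (px u t x) ^ 2)
                + (u t x) ^ 2 * px (px u) t x + (E t / 3) * (u t x) ^ 3)) t x
        = 0) := by
  have key : ∀ t x,
      pt (fun t x => (1 / 2) * Real.exp (2 * H t) * (u t x) ^ 2) t x
        + px (fun t x => Real.exp (2 * H t) *
            (u t x * px (px (px (px u))) t x - px u t x * px (px (px u)) t x
              + (1 / 2) * (px (px u) t x) ^ 2
              + B t * (u t x * px (px u) t x - (1 / 2) * (px u t x) ^ 2)
              + (u t x) ^ 2 * px (px u) t x + (E t / 3) * (u t x) ^ 3)) t x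
      = Real.exp (2 * H t) * u t x * KdV B E (fun _ => 2) Q u t x := by
    intro t x
    have s0 : ContDiff ℝ (⊤ : ℕ∞) (u t) :=
      hu.comp (contDiff_const.prodMk contDiff_id : ContDiff ℝ (⊤ : ℕ∞) fun y : ℝ => (t, y))
    have s1 := px_slice_smooth u t s0
    have s2 := px_slice_smooth _ t s1
    have s3 := px_slice_smooth _ t s2
    have s4 := px_slice_smooth _ t s3
    have d0 := px_slice_hasDerivAt _ t x s0
    have d1 := px_slice_hasDerivAt _ t x s1
    have d2 := px_slice_hasDerivAt _ t x s2
    have d3 := px_slice_hasDerivAt _ t x s3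
    have d4 := px_slice_hasDerivAt _ t x s4
    have st : ContDiff ℝ (⊤ : ℕ∞) (fun s => u s x) :=
      hu.comp (contDiff_id.prodMk contDiff_const : ContDiff ℝ (⊤ : ℕ∞) fun s : ℝ => (s, x))
    have dt : HasDerivAt (fun s => u s x) (pt u t x) t :=
      ((contDiff_infty_iff_deriv.mp st).1 t).hasDerivAt
    have h1 := ((((hH t).const_mul 2).exp).const_mul (1 / 2)).fun_mul (dt.fun_pow 2)
    have h2 := ((((((d0.fun_mul d4).fun_sub (d1.fun_mul d3)).fun_add
      ((d2.fun_pow 2).const_mul (1 / 2))).fun_add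
      (((d0.fun_mul d2).fun_sub ((d1.fun_pow 2).const_mul (1 / 2))).const_mul (B t))).fun_add
      ((d0.fun_pow 2).fun_mul d2)).fun_add
      ((d0.fun_pow 3).const_mul (E t / 3))).const_mul (Real.exp (2 * H t))
    have e1 : pt (fun t x => (1 / 2) * Real.exp (2 * H t) * (u t x) ^ 2) t x = _ := h1.deriv
    have e2 : px (fun t x => Real.exp (2 * H t) *
            (u t x * px (px (px (px u))) t x - px u t x * px (px (px u)) t x
              + (1 / 2) * (px (px u) t x) ^ 2
              + B t * (u t x * px (px u) t x - (1 / 2) * (px u t x) ^ 2)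
              + (u t x) ^ 2 * px (px u) t x + (E t / 3) * (u t x) ^ 3)) t x = _ := h2.deriv
    rw [e1, e2]
    unfold KdV
    norm_num
    ring
  refine ⟨key, fun h t x => ?_⟩
  rw [key, h, mul_zero]
end

section
/- Conserved integral quantity from the multiplier e^{∫Q}: Let B, E, F, Q : ℝ → ℝ be smooth and let H : ℝ → ℝ satisfy H' = Q. Suppose u : ℝ × ℝ → ℝ is smooth, satisfies 𝔈[u] = 0 everywhere, and there exists L > 0 such that u(t,x) = 0 whenever |x| ≥ L. Then the function t ↦ ∫_ℝ e^{H(t)} u(t,x) dx is constant. -/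
open Real MeasureTheory

lemma px_hasDeriv {f : ℝ → ℝ → ℝ} (hf : ContDiff ℝ (⊤ : ℕ∞) (Function.uncurry f)) (t x : ℝ) :
    HasDerivAt (fun y => f t y) (px f t x) x := by
  have h : Differentiable ℝ (fun y => Function.uncurry f (t, y)) :=
    (hf.differentiable (by simp)).comp (by fun_prop)
  exact (h x).hasDerivAt

lemma pt_hasDeriv {f : ℝ → ℝ → ℝ} (hf : ContDiff ℝ (⊤ : ℕ∞) (Function.uncurry f)) (t x : ℝ) :
    HasDerivAt (fun s => f s x) (pt f t x) t := by
  have h : Differentiable ℝ (fun s => Function.uncurry f (s, x)) :=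
    (hf.differentiable (by simp)).comp (by fun_prop)
  exact (h t).hasDerivAt

lemma px_smooth {f : ℝ → ℝ → ℝ} (hf : ContDiff ℝ (⊤ : ℕ∞) (Function.uncurry f)) :
    ContDiff ℝ (⊤ : ℕ∞) (Function.uncurry (px f)) := by
  have e : Function.uncurry (px f) = fun p => fderiv ℝ (Function.uncurry f) p (0, 1) := by
    ext ⟨t, x⟩
    have h1 := (hf.differentiable (by simp) (t, x)).hasFDerivAt
    have h2 : HasDerivAt (fun y : ℝ => (t, y)) ((0 : ℝ), (1 : ℝ)) x :=
      (hasDerivAt_const x t).prodMk (hasDerivAt_id x)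
    exact (px_hasDeriv hf t x).unique (h1.comp_hasDerivAt x h2)
  rw [e]
  exact (hf.fderiv_right (by simp)).clm_apply contDiff_const

lemma pt_smooth {f : ℝ → ℝ → ℝ} (hf : ContDiff ℝ (⊤ : ℕ∞) (Function.uncurry f)) :
    ContDiff ℝ (⊤ : ℕ∞) (Function.uncurry (pt f)) := by
  have e : Function.uncurry (pt f) = fun p => fderiv ℝ (Function.uncurry f) p (1, 0) := by
    ext ⟨t, x⟩
    have h1 := (hf.differentiable (by simp) (t, x)).hasFDerivAt
    have h2 : HasDerivAt (fun s : ℝ => (s, x)) ((1 : ℝ), (0 : ℝ)) t :=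
      (hasDerivAt_id t).prodMk (hasDerivAt_const t x)
    have h3 := h1.comp_hasDerivAt t h2
    exact (pt_hasDeriv hf t x).unique h3
  rw [e]
  exact (hf.fderiv_right (by simp)).clm_apply contDiff_const

lemma px_vanish {f : ℝ → ℝ → ℝ} {L : ℝ} (hf : ∀ t x : ℝ, L < |x| → f t x = 0) :
    ∀ t x : ℝ, L < |x| → px f t x = 0 := by
  intro t x hx
  have h : (fun y => f t y) =ᶠ[nhds x] fun _ => 0 := by
    filter_upwards [(isOpen_lt continuous_const continuous_abs).mem_nhds hx] with y hy
    exact hf t y hy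
  rw [px, h.deriv_eq]
  simp

/-- Differentiation under the integral sign on a compact interval. -/
lemma hasDerivAt_interval {G G' : ℝ → ℝ → ℝ} (hG : Continuous (Function.uncurry G))
    (hG' : Continuous (Function.uncurry G'))
    (hd : ∀ t x, HasDerivAt (fun s => G s x) (G' t x) t) (a b t : ℝ) :
    HasDerivAt (fun s => ∫ x in a..b, G s x) (∫ x in a..b, G' t x) t := by
  obtain ⟨C, hC⟩ := ((isCompact_closedBall t 1).prod
    (isCompact_uIcc (a := a) (b := b))).exists_bound_of_continuousOn hG'.continuousOn
  have c1 : ∀ s, Continuous (G s) := fun s =>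
    hG.comp (continuous_const.prodMk continuous_id)
  have c2 : ∀ s, Continuous (G' s) := fun s =>
    hG'.comp (continuous_const.prodMk continuous_id)
  refine (intervalIntegral.hasDerivAt_integral_of_dominated_loc_of_deriv_le
    (F := G) (F' := G') (bound := fun _ => C) (s := Metric.closedBall t 1)
    (Metric.closedBall_mem_nhds t one_pos) ?_ ?_ ?_ ?_ ?_ ?_).2
  · exact Filter.Eventually.of_forall fun s => (c1 s).aestronglyMeasurable
  · exact (c1 t).intervalIntegrable _ _
  · exact (c2 t).aestronglyMeasurable
  · exact Filter.Eventually.of_forall fun x hx s hs =>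
      hC (s, x) ⟨hs, Set.uIoc_subset_uIcc hx⟩
  · exact intervalIntegrable_const
  · exact Filter.Eventually.of_forall fun x _ s _ => hd s x

/-- conserved integral quantity from the multiplier `e^{∫Q}`.
If `H' = Q`, `u` is a smooth solution of `𝔈[u] = 0` vanishing for `|x| ≥ L`, then
`t ↦ ∫_ℝ e^{H(t)} u(t,x) dx` is constant. -/
theorem conserved_integral_generic
    (B E F Q : ℝ → ℝ)
    (hB : ContDiff ℝ (⊤ : ℕ∞) B) (hE : ContDiff ℝ (⊤ : ℕ∞) E)
    (hF : ContDiff ℝ (⊤ : ℕ∞) F) (hQ : ContDiff ℝ (⊤ : ℕ∞) Q)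
    (H : ℝ → ℝ) (hH : ∀ t, HasDerivAt H (Q t) t)
    (u : ℝ → ℝ → ℝ) (hu : ContDiff ℝ (⊤ : ℕ∞) (Function.uncurry u))
    (hsol : ∀ t x, KdV B E F Q u t x = 0)
    (hsupp : ∃ L > (0 : ℝ), ∀ t x : ℝ, L ≤ |x| → u t x = 0) :
    ∀ t₁ t₂ : ℝ,
      (∫ x : ℝ, Real.exp (H t₁) * u t₁ x) = ∫ x : ℝ, Real.exp (H t₂) * u t₂ x := by
  obtain ⟨L, hL, hsupp⟩ := hsupp
  have v0 : ∀ t x : ℝ, L < |x| → u t x = 0 := fun t x h => hsupp t x h.le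
  have v1 := px_vanish v0
  have v2 := px_vanish v1
  have v3 := px_vanish v2
  have v4 := px_vanish v3
  have s1 := px_smooth hu
  have s2 := px_smooth s1
  have s3 := px_smooth s2
  have s4 := px_smooth s3
  have hHc : Continuous H := continuous_iff_continuousAt.2 fun t => (hH t).continuousAt
  have key : ∀ t, (∫ x : ℝ, Real.exp (H t) * u t x)
      = ∫ x in (-(L + 1))..(L + 1), Real.exp (H t) * u t x := by
    intro t
    rw [intervalIntegral.integral_eq_integral_of_support_subset]
    intro x hx
    by_contra hn
    apply hx
    have : L ≤ |x| := by
      by_contra hlt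
      push Not at hlt
      rw [abs_lt] at hlt
      exact hn ⟨by linarith, by linarith⟩
    simp [hsupp t x this]
  have hder : ∀ t, HasDerivAt (fun s => ∫ x in (-(L + 1))..(L + 1), Real.exp (H s) * u s x)
      0 t := by
    intro t
    have cu := hu.continuous
    have cpt := (pt_smooth hu).continuous
    have cQ := hQ.continuous
    have h := hasDerivAt_interval (G := fun s x => Real.exp (H s) * u s x)
      (G' := fun s x => Real.exp (H s) * Q s * u s x + Real.exp (H s) * pt u s x)
      (((Real.continuous_exp.comp (hHc.comp continuous_fst))).mul cu)
      (((((Real.continuous_exp.comp (hHc.comp continuous_fst))).mul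
        (cQ.comp continuous_fst)).mul cu).add
        (((Real.continuous_exp.comp (hHc.comp continuous_fst))).mul cpt))
      (fun s x => ((hH s).exp).mul (pt_hasDeriv hu s x)) (-(L + 1)) (L + 1) t
    convert h using 1
    have hflux : ∀ x, HasDerivAt (fun x => -(Real.exp (H t) * (px (px (px (px u))) t x
        + B t * px (px u) t x + u t x * px (px u) t x
        + (F t - 1) / 2 * (px u t x * px u t x) + E t / 2 * (u t x * u t x))))
        (Real.exp (H t) * Q t * u t x + Real.exp (H t) * pt u t x) x := by
      intro x
      have d0 := px_hasDeriv hu t x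
      have d1 := px_hasDeriv s1 t x
      have d2 := px_hasDeriv s2 t x
      have d4 := px_hasDeriv s4 t x
      have := (((((d4.add (d2.const_mul (B t))).add (d0.mul d2)).add
        ((d1.mul d1).const_mul ((F t - 1) / 2))).add
        ((d0.mul d0).const_mul (E t / 2))).const_mul (Real.exp (H t))).neg
      refine this.congr_deriv ?_
      have e := hsol t x
      unfold KdV at e
      linear_combination (-Real.exp (H t)) * e
    have cpx : Continuous (fun x => Real.exp (H t) * Q t * u t x + Real.exp (H t) * pt u t x) := by
      have a1 : Continuous (fun x => u t x) := cu.comp (continuous_const.prodMk continuous_id)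
      have a2 : Continuous (fun x => pt u t x) := cpt.comp (continuous_const.prodMk continuous_id)
      exact (a1.const_mul _).add (a2.const_mul _)
    rw [intervalIntegral.integral_eq_sub_of_hasDerivAt (fun x _ => hflux x)
      (cpx.intervalIntegrable _ _)]
    have p1 : L < |L + 1| := by rw [abs_of_pos] <;> linarith
    have p2 : L < |-(L + 1)| := by rwa [abs_neg]
    simp only [v0 t _ p1, v1 t _ p1, v2 t _ p1, v4 t _ p1, v0 t _ p2, v1 t _ p2, v2 t _ p2,
      v4 t _ p2]
    simp
  intro t₁ t₂
  rw [key, key]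
  exact is_const_of_deriv_eq_zero (fun t => (hder t).differentiableAt)
    (fun t => (hder t).deriv) t₁ t₂
end
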